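/- Let t > 0 and let ψ : (0, ∞) → ℝ be twice continuously differentiable. Define h : (0, ∞) → ℝ by h(r) = ψ((8/3) t r^{3/2}). Then h satisfies h''(r) + h'(r)/r = 8 t² r sinh(2 h(r)) for all r > 0 if and only if ψ satisfies the Painlevé III equation ψ''(ρ) + ψ'(ρ)/ρ = (1/2) sinh(2 ψ(ρ)) for all ρ > 0. -/

import Mathlib

/-!
The operator `L f = f'' + f' / r` is the radial part of the planar Laplacian, and
`φ(r) = c * r ^ a` is the radial part of the conformal map `z ↦ c * z ^ a`. Accordingly
`L (f ∘ φ) = (φ') ^ 2 * (L f) ∘ φ`: by the chain rule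
`L (f ∘ φ) = (φ') ^ 2 * f'' ∘ φ + L φ * f' ∘ φ`, and `L φ = (φ') ^ 2 / φ`. Since `φ` maps `(0, ∞)`
onto itself with `φ' ≠ 0`, equations for `L (f ∘ φ)` and for `L f` correspond to each other.
For `c = 8 / 3 * t` and `a = 3 / 2`, `(φ') ^ 2 = 16 * t ^ 2 * r`.
-/

section RadialLaplacian

variable {E : Type*} [NormedAddCommGroup E] [NormedSpace ℝ E]

/-- The radial part `f'' + f' / r` of the Laplacian on `ℝ²`, acting on functions of the radius. It
is the differential operator common to the two equations related by the power substitution. -/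
noncomputable def radialLaplacian (f : ℝ → E) (r : ℝ) : E :=
  deriv (deriv f) r + r⁻¹ • deriv f r

theorem radialLaplacian_comp {f : ℝ → E} {φ : ℝ → ℝ} {r : ℝ} (hf : ContDiffAt ℝ 2 f (φ r))
    (hφ : ContDiffAt ℝ 2 φ r) :
    radialLaplacian (f ∘ φ) r =
      deriv φ r ^ 2 • deriv (deriv f) (φ r) + radialLaplacian φ r • deriv f (φ r) := by
  have second_deriv : deriv (deriv (f ∘ φ)) r =
      deriv φ r ^ 2 • deriv (deriv f) (φ r) + deriv (deriv φ) r • deriv f (φ r) := by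
    simpa only [iteratedDeriv_succ, iteratedDeriv_zero] using iteratedDeriv_scomp_two hf hφ
  have first_deriv : deriv (f ∘ φ) r = deriv φ r • deriv f (φ r) :=
    deriv.scomp r (hf.differentiableAt two_ne_zero) (hφ.differentiableAt two_ne_zero)
  simp only [radialLaplacian, second_deriv, first_deriv]
  module

theorem deriv_const_mul_rpow (c a : ℝ) {r : ℝ} (hr : r ≠ 0) :
    deriv (fun x : ℝ ↦ c * x ^ a) r = a * (c * r ^ a) / r := by
  rw [deriv_const_mul_field, Real.deriv_rpow_const, Real.rpow_sub_one hr]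
  ring

theorem radialLaplacian_const_mul_rpow (c a : ℝ) {r : ℝ} (hr : r ≠ 0) :
    radialLaplacian (fun x : ℝ ↦ c * x ^ a) r =
      deriv (fun x : ℝ ↦ c * x ^ a) r ^ 2 / (c * r ^ a) := by
  have deriv_eq : deriv (fun x : ℝ ↦ c * x ^ a) = fun x ↦ c * a * x ^ (a - 1) := by
    ext x
    rw [deriv_const_mul_field, Real.deriv_rpow_const, mul_assoc]
  rw [radialLaplacian, deriv_const_mul_rpow c a hr, deriv_eq, deriv_const_mul_rpow _ _ hr,
    Real.rpow_sub_one hr, smul_eq_mul]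
  field

theorem radialLaplacian_comp_const_mul_rpow {f : ℝ → E} {c a r : ℝ} (hr : r ≠ 0)
    (hf : ContDiffAt ℝ 2 f (c * r ^ a)) :
    radialLaplacian (fun x ↦ f (c * x ^ a)) r =
      deriv (fun x : ℝ ↦ c * x ^ a) r ^ 2 • radialLaplacian f (c * r ^ a) := by
  have hφ : ContDiffAt ℝ 2 (fun x : ℝ ↦ c * x ^ a) r :=
    contDiffAt_const.mul (Real.contDiffAt_rpow_const_of_ne hr)
  calc radialLaplacian (f ∘ fun x ↦ c * x ^ a) r
    _ = deriv (fun x : ℝ ↦ c * x ^ a) r ^ 2 • deriv (deriv f) (c * r ^ a) +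
          radialLaplacian (fun x : ℝ ↦ c * x ^ a) r • deriv f (c * r ^ a) :=
      radialLaplacian_comp (φ := fun x ↦ c * x ^ a) hf hφ
    _ = deriv (fun x : ℝ ↦ c * x ^ a) r ^ 2 • radialLaplacian f (c * r ^ a) := by
      rw [radialLaplacian_const_mul_rpow c a hr, div_eq_mul_inv, mul_smul, ← smul_add,
        radialLaplacian]

theorem sq_deriv_const_mul_rpow_three_halves (c : ℝ) {r : ℝ} (hr : 0 < r) :
    deriv (fun x : ℝ ↦ c * x ^ ((3 : ℝ) / 2)) r ^ 2 = 9 / 4 * c ^ 2 * r := by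
  have sq_rpow : (r ^ ((3 : ℝ) / 2)) ^ 2 = r ^ 3 := by
    rw [← Real.rpow_mul_natCast hr.le, ← Real.rpow_natCast]
    norm_num
  rw [deriv_const_mul_rpow c _ hr.ne', div_pow, mul_pow, mul_pow, sq_rpow]
  field

theorem surjOn_const_mul_rpow {c a : ℝ} (hc : 0 < c) (ha : a ≠ 0) :
    Set.SurjOn (fun r : ℝ ↦ c * r ^ a) (Set.Ioi 0) (Set.Ioi 0) := by
  intro ρ hρ
  have hq : 0 < ρ / c := div_pos hρ hc
  refine ⟨(ρ / c) ^ a⁻¹, Real.rpow_pos_of_pos hq _, ?_⟩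
  simp only [Real.rpow_inv_rpow hq.le ha, mul_div_cancel₀ ρ hc.ne']

theorem stmt8_general {c a : ℝ} (hc : 0 < c) (ha : a ≠ 0) {f : ℝ → E}
    (hf : ContDiffOn ℝ 2 f (Set.Ioi 0)) (g : ℝ → E) :
    (∀ r > 0, radialLaplacian (fun x ↦ f (c * x ^ a)) r =
        deriv (fun x : ℝ ↦ c * x ^ a) r ^ 2 • g (c * r ^ a)) ↔
      ∀ ρ > 0, radialLaplacian f ρ = g ρ := by
  have pointwise (r : ℝ) (hr : 0 < r) :
      radialLaplacian (fun x ↦ f (c * x ^ a)) r =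
          deriv (fun x : ℝ ↦ c * x ^ a) r ^ 2 • g (c * r ^ a) ↔
        radialLaplacian f (c * r ^ a) = g (c * r ^ a) := by
    have hρ : 0 < c * r ^ a := by positivity
    have sq_deriv_ne_zero : deriv (fun x : ℝ ↦ c * x ^ a) r ^ 2 ≠ 0 := by
      rw [deriv_const_mul_rpow c a hr.ne']
      positivity
    rw [radialLaplacian_comp_const_mul_rpow hr.ne' (hf.contDiffAt (Ioi_mem_nhds hρ)),
      smul_right_inj sq_deriv_ne_zero]
  constructor
  · intro hsol ρ hρ
    obtain ⟨r, hr, rfl⟩ := surjOn_const_mul_rpow hc ha hρ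
    exact (pointwise r hr).mp (hsol r hr)
  · intro hsol r hr
    exact (pointwise r hr).mpr (hsol _ (by positivity))

end RadialLaplacian

theorem stmt8 (t : ℝ) (ht : 0 < t) (ψ : ℝ → ℝ) (hψ : ContDiffOn ℝ 2 ψ (Set.Ioi 0))
    (h : ℝ → ℝ) (hh : ∀ r : ℝ, h r = ψ (8 / 3 * t * r ^ ((3 : ℝ) / 2))) :
    (∀ r > (0 : ℝ), deriv (deriv h) r + deriv h r / r
        = 8 * t ^ 2 * r * Real.sinh (2 * h r)) ↔
      (∀ ρ > (0 : ℝ), deriv (deriv ψ) ρ + deriv ψ ρ / ρ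
        = (1 / 2) * Real.sinh (2 * ψ ρ)) := by
  obtain rfl : h = fun r ↦ ψ (8 / 3 * t * r ^ ((3 : ℝ) / 2)) := funext hh
  convert stmt8_general (c := 8 / 3 * t) (a := 3 / 2) (by positivity) (by norm_num) hψ
    (fun ρ ↦ 1 / 2 * Real.sinh (2 * ψ ρ)) using 3 with r hr ρ
  · rw [sq_deriv_const_mul_rpow_three_halves _ hr, radialLaplacian]
    simp only [smul_eq_mul]
    ring_nf
  · rw [radialLaplacian, smul_eq_mul, div_eq_inv_mul]
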